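/- Let (X,d,F) and (X',d',F') be filtered chain complexes over ZMod 2, let f : X → X' and g : X' → X be filtered chain maps, and let x ∈ X satisfy g (f x) = x. Then the infimum (in WithTop ℤ) of {i : x ∈ Submodule.map d (F i)} equals the infimum of {i : f x ∈ Submodule.map d' (F' i)}; that is, κ(x) = κ'(f x). (Second assertion of the paper's Lemma 3.1, which underlies the invariance of κ under braid conjugation and braid isotopy.) -/

import Mathlib

/-- A filtered chain map carries boundaries of filtered pieces to boundaries of filtered pieces. -/
theorem map_mem_map_of_chain_map {R X X' : Type*} [Semiring R]
    [AddCommMonoid X] [Module R X] [AddCommMonoid X'] [Module R X']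
    {d : X →ₗ[R] X} {d' : X' →ₗ[R] X'} {f : X →ₗ[R] X'} (hf : f ∘ₗ d = d' ∘ₗ f)
    {p : Submodule R X} {p' : Submodule R X'} (hp : Submodule.map f p ≤ p')
    {x : X} (hx : x ∈ Submodule.map d p) : f x ∈ Submodule.map d' p' := by
  obtain ⟨y, hy, rfl⟩ := hx
  exact ⟨f y, hp (Submodule.mem_map_of_mem hy), (LinearMap.congr_fun hf y).symm⟩

/-- Second assertion of Lemma 3.1: if `f` and `g` are filtered chain maps with
`g (f x) = x`, then `κ(x) = κ'(f x)`. -/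
theorem kappa_eq_of_filtered_chain_maps
    {X X' : Type*} [AddCommGroup X] [Module (ZMod 2) X]
    [AddCommGroup X'] [Module (ZMod 2) X']
    (d : X →ₗ[ZMod 2] X) (hd : d ∘ₗ d = 0)
    (F : ℤ → Submodule (ZMod 2) X) (hF : Monotone F)
    (hdF : ∀ i : ℤ, Submodule.map d (F i) ≤ F i)
    (d' : X' →ₗ[ZMod 2] X') (hd' : d' ∘ₗ d' = 0)
    (F' : ℤ → Submodule (ZMod 2) X') (hF' : Monotone F')
    (hdF' : ∀ i : ℤ, Submodule.map d' (F' i) ≤ F' i)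
    (f : X →ₗ[ZMod 2] X') (hf : f ∘ₗ d = d' ∘ₗ f)
    (hfF : ∀ i : ℤ, Submodule.map f (F i) ≤ F' i)
    (g : X' →ₗ[ZMod 2] X) (hg : g ∘ₗ d' = d ∘ₗ g)
    (hgF : ∀ i : ℤ, Submodule.map g (F' i) ≤ F i)
    (x : X) (hgf : g (f x) = x) :
    sInf ((fun i : ℤ => (i : WithTop ℤ)) ''
        {i : ℤ | x ∈ Submodule.map d (F i)}) =
      sInf ((fun i : ℤ => (i : WithTop ℤ)) ''
        {i : ℤ | f x ∈ Submodule.map d' (F' i)}) := by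
  congr 2
  ext i
  refine ⟨map_mem_map_of_chain_map hf (hfF i), fun hx => ?_⟩
  have hgx := map_mem_map_of_chain_map hg (hgF i) hx
  rwa [hgf] at hgx
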